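/- arXiv:1512.08712 — 8 statements merged into one kernel-verified Lean document; each statement's English description precedes it below -/
import Mathlib

section
/- Let R be an invertible n²×n² matrix over k satisfying the quantum Yang–Baxter equation, and suppose R^{t₂} is invertible. Then: (i) (Rᵗ)₁₂(Rᵗ)₁₃(Rᵗ)₂₃ = (Rᵗ)₂₃(Rᵗ)₁₃(Rᵗ)₁₂, i.e. Rᵗ also satisfies the quantum Yang–Baxter equation; (ii) R₁₂·((R^{t₂})⁻¹)₁₃·((R^{t₂})⁻¹)₂₃ = ((R^{t₂})⁻¹)₂₃·((R^{t₂})⁻¹)₁₃·R₁₂; (iii) (R^{t₂})₁₃·(R^{t₂})₂₃·R₁₂ = R₁₂·(R^{t₂})₂₃·(R^{t₂})₁₃. -/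
open Matrix

/-- Partial transpose in the first factor: `(M^{t₁})^{(i,j)}_{(k,l)} = M^{(k,j)}_{(i,l)}`. -/
def pt1 {α : Type*} {n : ℕ} (M : Matrix (Fin n × Fin n) (Fin n × Fin n) α) :
    Matrix (Fin n × Fin n) (Fin n × Fin n) α :=
  Matrix.of fun p q => M (q.1, p.2) (p.1, q.2)

/-- Partial transpose in the second factor: `(M^{t₂})^{(i,j)}_{(k,l)} = M^{(i,l)}_{(k,j)}`. -/
def pt2 {α : Type*} {n : ℕ} (M : Matrix (Fin n × Fin n) (Fin n × Fin n) α) :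
    Matrix (Fin n × Fin n) (Fin n × Fin n) α :=
  Matrix.of fun p q => M (p.1, q.2) (q.1, p.2)

/-- `M₁₂` acting on triples: `(M₁₂)^{(i,j,m)}_{(k,l,p)} = M^{(i,j)}_{(k,l)} δ_{mp}`. -/
def L12 {α : Type*} [Semiring α] {n : ℕ} (M : Matrix (Fin n × Fin n) (Fin n × Fin n) α) :
    Matrix (Fin n × Fin n × Fin n) (Fin n × Fin n × Fin n) α :=
  Matrix.of fun a b => if a.2.2 = b.2.2 then M (a.1, a.2.1) (b.1, b.2.1) else 0

/-- `M₂₃` acting on triples: `(M₂₃)^{(m,i,j)}_{(p,k,l)} = δ_{mp} M^{(i,j)}_{(k,l)}`. -/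
def L23 {α : Type*} [Semiring α] {n : ℕ} (M : Matrix (Fin n × Fin n) (Fin n × Fin n) α) :
    Matrix (Fin n × Fin n × Fin n) (Fin n × Fin n × Fin n) α :=
  Matrix.of fun a b => if a.1 = b.1 then M (a.2.1, a.2.2) (b.2.1, b.2.2) else 0

/-- `M₁₃` acting on triples: `(M₁₃)^{(i,m,j)}_{(k,p,l)} = δ_{mp} M^{(i,j)}_{(k,l)}`. -/
def L13 {α : Type*} [Semiring α] {n : ℕ} (M : Matrix (Fin n × Fin n) (Fin n × Fin n) α) :
    Matrix (Fin n × Fin n × Fin n) (Fin n × Fin n × Fin n) α :=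
  Matrix.of fun a b => if a.2.1 = b.2.1 then M (a.1, a.2.2) (b.1, b.2.2) else 0

section helpers
variable {k : Type*} [CommRing k] {n : ℕ}

def T3aux (X : Matrix (Fin n × Fin n × Fin n) (Fin n × Fin n × Fin n) k) :
    Matrix (Fin n × Fin n × Fin n) (Fin n × Fin n × Fin n) k :=
  Matrix.of fun a b => X (a.1, a.2.1, b.2.2) (b.1, b.2.1, a.2.2)

theorem T3aux_left (M : Matrix (Fin n × Fin n) (Fin n × Fin n) k)
    (X : Matrix (Fin n × Fin n × Fin n) (Fin n × Fin n × Fin n) k) :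
    T3aux (L12 M * X) = L12 M * T3aux X := by
  ext ⟨a, b, c⟩ ⟨d, e, f⟩
  simp [T3aux, L12, Matrix.mul_apply, Fintype.sum_prod_type]

theorem T3aux_right (M : Matrix (Fin n × Fin n) (Fin n × Fin n) k)
    (X : Matrix (Fin n × Fin n × Fin n) (Fin n × Fin n × Fin n) k) :
    T3aux (X * L12 M) = T3aux X * L12 M := by
  ext ⟨a, b, c⟩ ⟨d, e, f⟩
  simp [T3aux, L12, Matrix.mul_apply, Fintype.sum_prod_type]

theorem T3aux_a (A B : Matrix (Fin n × Fin n) (Fin n × Fin n) k) :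
    T3aux (L13 A * L23 B) = L23 (pt2 B) * L13 (pt2 A) := by
  ext ⟨a, b, c⟩ ⟨d, e, f⟩
  simp [T3aux, L13, L23, pt2, Matrix.mul_apply, Fintype.sum_prod_type, Finset.sum_ite_irrel, mul_comm]

theorem T3aux_b (A B : Matrix (Fin n × Fin n) (Fin n × Fin n) k) :
    T3aux (L23 A * L13 B) = L13 (pt2 B) * L23 (pt2 A) := by
  ext ⟨a, b, c⟩ ⟨d, e, f⟩
  simp [T3aux, L13, L23, pt2, Matrix.mul_apply, Fintype.sum_prod_type, Finset.sum_ite_irrel, mul_comm]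

theorem L13_mul_aux (A B : Matrix (Fin n × Fin n) (Fin n × Fin n) k) :
    L13 A * L13 B = L13 (A * B) := by
  ext ⟨a, b, c⟩ ⟨d, e, f⟩
  by_cases h : b = e <;>
  simp [L13, Matrix.mul_apply, Fintype.sum_prod_type, Finset.sum_ite_irrel, h]

theorem L23_mul_aux (A B : Matrix (Fin n × Fin n) (Fin n × Fin n) k) :
    L23 A * L23 B = L23 (A * B) := by
  ext ⟨a, b, c⟩ ⟨d, e, f⟩
  by_cases h : a = d <;>
  simp [L23, Matrix.mul_apply, Fintype.sum_prod_type, Finset.sum_ite_irrel, h]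

theorem L13_one_aux : L13 (1 : Matrix (Fin n × Fin n) (Fin n × Fin n) k) = 1 := by
  ext ⟨a, b, c⟩ ⟨d, e, f⟩
  simp only [L13, Matrix.one_apply, Matrix.of_apply, Prod.mk.injEq]
  grind

theorem L23_one_aux : L23 (1 : Matrix (Fin n × Fin n) (Fin n × Fin n) k) = 1 := by
  ext ⟨a, b, c⟩ ⟨d, e, f⟩
  simp only [L23, Matrix.one_apply, Matrix.of_apply, Prod.mk.injEq]
  grind

theorem L12_tr_aux (A : Matrix (Fin n × Fin n) (Fin n × Fin n) k) : L12 Aᵀ = (L12 A)ᵀ := by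
  ext a b; simp [L12, eq_comm]

theorem L13_tr_aux (A : Matrix (Fin n × Fin n) (Fin n × Fin n) k) : L13 Aᵀ = (L13 A)ᵀ := by
  ext a b; simp [L13, eq_comm]

theorem L23_tr_aux (A : Matrix (Fin n × Fin n) (Fin n × Fin n) k) : L23 Aᵀ = (L23 A)ᵀ := by
  ext a b; simp [L23, eq_comm]

end helpers

/-- if `R` is an invertible solution of the QYBE with `R^{t₂}` invertible, then
(i) `Rᵗ` satisfies the QYBE; (ii) `R₁₂((R^{t₂})⁻¹)₁₃((R^{t₂})⁻¹)₂₃ = ((R^{t₂})⁻¹)₂₃((R^{t₂})⁻¹)₁₃R₁₂`;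
(iii) `(R^{t₂})₁₃(R^{t₂})₂₃R₁₂ = R₁₂(R^{t₂})₂₃(R^{t₂})₁₃`. -/
theorem stmt1 {k : Type*} [CommRing k] {n : ℕ} (hn : 0 < n)
    (R : Matrix (Fin n × Fin n) (Fin n × Fin n) k)
    (hR : IsUnit R)
    (hQYBE : L12 R * L13 R * L23 R = L23 R * L13 R * L12 R)
    (ht2 : IsUnit (pt2 R)) :
    (L12 Rᵀ * L13 Rᵀ * L23 Rᵀ = L23 Rᵀ * L13 Rᵀ * L12 Rᵀ) ∧
    (L12 R * L13 (pt2 R)⁻¹ * L23 (pt2 R)⁻¹ = L23 (pt2 R)⁻¹ * L13 (pt2 R)⁻¹ * L12 R) ∧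
    (L13 (pt2 R) * L23 (pt2 R) * L12 R = L12 R * L23 (pt2 R) * L13 (pt2 R)) := by
  have h3 : L13 (pt2 R) * L23 (pt2 R) * L12 R = L12 R * L23 (pt2 R) * L13 (pt2 R) := by
    have h := congrArg T3aux hQYBE
    rw [T3aux_right, T3aux_b, Matrix.mul_assoc, T3aux_left, T3aux_a] at h
    rw [← h, Matrix.mul_assoc]
  refine ⟨?_, ?_, h3⟩
  · have h := congrArg Matrix.transpose hQYBE
    simp only [Matrix.transpose_mul] at h
    simp only [L12_tr_aux, L13_tr_aux, L23_tr_aux, Matrix.mul_assoc] at h ⊢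
    exact h.symm
  · have hd := (Matrix.isUnit_iff_isUnit_det _).1 ht2
    have e1 := Matrix.nonsing_inv_mul _ hd
    have e2 := Matrix.mul_nonsing_inv _ hd
    generalize (pt2 R)⁻¹ = S at *
    have a1 : L13 S * L13 (pt2 R) = 1 := by rw [L13_mul_aux, e1, L13_one_aux]
    have a2 : L13 (pt2 R) * L13 S = 1 := by rw [L13_mul_aux, e2, L13_one_aux]
    have b1 : L23 S * L23 (pt2 R) = 1 := by rw [L23_mul_aux, e1, L23_one_aux]
    have b2 : L23 (pt2 R) * L23 S = 1 := by rw [L23_mul_aux, e2, L23_one_aux]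
    generalize L13 S = s at *
    generalize L23 S = u at *
    generalize L13 (pt2 R) = x at *
    generalize L23 (pt2 R) = y at *
    generalize L12 R = r at *
    calc r * s * u = (u * (s * x) * y) * r * s * u := by
          rw [a1, Matrix.mul_one, b1, Matrix.one_mul]
      _ = u * s * (x * y * r) * s * u := by simp only [Matrix.mul_assoc]
      _ = u * s * r * (y * (x * s) * u) := by rw [h3]; simp only [Matrix.mul_assoc]
      _ = u * s * r := by rw [a2, Matrix.mul_one, b2, Matrix.mul_one]
end

section
/- Let R be an invertible n²×n² matrix over k satisfying the quantum Yang–Baxter equation, let x₁, …, x_m ∈ k with x_{i₀} = −1 for some index i₀, and suppose the braiding PR satisfies the minimal polynomial equation ∏_{j=1}^{m}(PR − x_j·I) = 0. Define R' := P + P·∏_{j ≠ i₀}(PR − x_j·I). Then: (i) (PR + I)(PR' − I) = 0; (ii) R₁₂·R₁₃·R'₂₃ = R'₂₃·R₁₃·R₁₂; (iii) R₂₃·R₁₃·R'₁₂ = R'₁₂·R₁₃·R₂₃; (iv) R₂₁·R'₁₂ = R'₂₁·R₁₂, where R₂₁ := P·R·P and R'₂₁ := P·R'·P. Thus the pair (R,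 R') satisfies the compatibility conditions required for the braided vector algebra V(R',R) and braided covector algebra V^∨(R',R₂₁⁻¹). -/
open Matrix

/-- The permutation matrix `P` with entries `P^{(i,j)}_{(k,l)} = δ_{il} δ_{jk}`. -/
def permP (k : Type*) [Semiring k] (n : ℕ) : Matrix (Fin n × Fin n) (Fin n × Fin n) k :=
  Matrix.of fun p q => if p.1 = q.2 ∧ p.2 = q.1 then 1 else 0

theorem L23_mulP {k : Type*} [CommRing k] {n : ℕ} (M : Matrix (Fin n × Fin n × Fin n) (Fin n × Fin n × Fin n) k)
    (a b : Fin n × Fin n × Fin n) :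
    (M * L23 (permP k n)) a b = M a (b.1, b.2.2, b.2.1) := by
  rw [Matrix.mul_apply, Finset.sum_eq_single (b.1, b.2.2, b.2.1)]
  · simp [L23, permP]
  · rintro ⟨c1, c2, c3⟩ - hc
    simp only [L23, permP, Matrix.of_apply]
    grind
  · simp

theorem L23_Pmul {k : Type*} [CommRing k] {n : ℕ} (M : Matrix (Fin n × Fin n × Fin n) (Fin n × Fin n × Fin n) k)
    (a b : Fin n × Fin n × Fin n) :
    (L23 (permP k n) * M) a b = M (a.1, a.2.2, a.2.1) b := by
  rw [Matrix.mul_apply, Finset.sum_eq_single (a.1, a.2.2, a.2.1)]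
  · simp [L23, permP]
  · rintro ⟨c1, c2, c3⟩ - hc
    simp only [L23, permP, Matrix.of_apply]
    grind
  · simp

theorem L12_mulP {k : Type*} [CommRing k] {n : ℕ} (M : Matrix (Fin n × Fin n × Fin n) (Fin n × Fin n × Fin n) k)
    (a b : Fin n × Fin n × Fin n) :
    (M * L12 (permP k n)) a b = M a (b.2.1, b.1, b.2.2) := by
  rw [Matrix.mul_apply, Finset.sum_eq_single (b.2.1, b.1, b.2.2)]
  · simp [L12, permP]
  · rintro ⟨c1, c2, c3⟩ - hc
    simp only [L12, permP, Matrix.of_apply]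
    grind
  · simp

theorem L12_Pmul {k : Type*} [CommRing k] {n : ℕ} (M : Matrix (Fin n × Fin n × Fin n) (Fin n × Fin n × Fin n) k)
    (a b : Fin n × Fin n × Fin n) :
    (L12 (permP k n) * M) a b = M (a.2.1, a.1, a.2.2) b := by
  rw [Matrix.mul_apply, Finset.sum_eq_single (a.2.1, a.1, a.2.2)]
  · simp [L12, permP]
  · rintro ⟨c1, c2, c3⟩ - hc
    simp only [L12, permP, Matrix.of_apply]
    grind
  · simp

theorem L23_mul {k : Type*} [CommRing k] {n : ℕ} (M N : Matrix (Fin n × Fin n) (Fin n × Fin n) k) :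
    L23 (M * N) = L23 M * L23 N := by
  ext ⟨a1, a2, a3⟩ ⟨b1, b2, b3⟩
  simp only [L23, Matrix.mul_apply, Matrix.of_apply]
  symm
  rw [Fintype.sum_prod_type, Finset.sum_eq_single a1]
  · by_cases h : a1 = b1 <;> simp [h]
  · intro c _ hc
    simp [Ne.symm hc]
  · simp

theorem L12_mul {k : Type*} [CommRing k] {n : ℕ} (M N : Matrix (Fin n × Fin n) (Fin n × Fin n) k) :
    L12 (M * N) = L12 M * L12 N := by
  ext ⟨a1, a2, a3⟩ ⟨b1, b2, b3⟩
  simp only [L12, Matrix.mul_apply, Matrix.of_apply]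
  simp only [Fintype.sum_prod_type]
  by_cases h : a3 = b3 <;> simp [h]

theorem L23_poly {k : Type*} [CommRing k] {n : ℕ} (M : Matrix (Fin n × Fin n) (Fin n × Fin n) k) (c : k) :
    L23 (M - c • 1) = L23 M - c • 1 := by
  ext ⟨a1, a2, a3⟩ ⟨b1, b2, b3⟩
  simp only [L23, Matrix.sub_apply, Matrix.smul_apply, Matrix.one_apply, Matrix.of_apply, Prod.mk.injEq]
  by_cases h : a1 = b1 <;> simp [h]

theorem L12_poly {k : Type*} [CommRing k] {n : ℕ} (M : Matrix (Fin n × Fin n) (Fin n × Fin n) k) (c : k) :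
    L12 (M - c • 1) = L12 M - c • 1 := by
  ext ⟨a1, a2, a3⟩ ⟨b1, b2, b3⟩
  simp only [L12, Matrix.sub_apply, Matrix.smul_apply, Matrix.one_apply, Matrix.of_apply, Prod.mk.injEq]
  by_cases h : a3 = b3 <;> simp [h]

theorem L23_add {k : Type*} [CommRing k] {n : ℕ} (M N : Matrix (Fin n × Fin n) (Fin n × Fin n) k) :
    L23 (M + N) = L23 M + L23 N := by
  ext a b
  simp only [L23, Matrix.add_apply, Matrix.of_apply]
  split_ifs <;> simp

theorem L12_add {k : Type*} [CommRing k] {n : ℕ} (M N : Matrix (Fin n × Fin n) (Fin n × Fin n) k) :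
    L12 (M + N) = L12 M + L12 N := by
  ext a b
  simp only [L12, Matrix.add_apply, Matrix.of_apply]
  split_ifs <;> simp

theorem L23_one {k : Type*} [CommRing k] {n : ℕ} :
    L23 (1 : Matrix (Fin n × Fin n) (Fin n × Fin n) k) = 1 := by
  ext ⟨a1, a2, a3⟩ ⟨b1, b2, b3⟩
  simp only [L23, Matrix.one_apply, Matrix.of_apply, Prod.mk.injEq]
  by_cases h : a1 = b1 <;> simp [h]

theorem L12_one {k : Type*} [CommRing k] {n : ℕ} :
    L12 (1 : Matrix (Fin n × Fin n) (Fin n × Fin n) k) = 1 := by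
  ext ⟨a1, a2, a3⟩ ⟨b1, b2, b3⟩
  simp only [L12, Matrix.one_apply, Matrix.of_apply, Prod.mk.injEq]
  by_cases h : a3 = b3 <;> simp [h]

theorem permP_sq {k : Type*} [CommRing k] {n : ℕ} : permP k n * permP k n = 1 := by
  ext ⟨a1, a2⟩ ⟨b1, b2⟩
  rw [Matrix.mul_apply, Finset.sum_eq_single (a2, a1)]
  · simp only [permP, Matrix.of_apply, Matrix.one_apply, Prod.mk.injEq]
    grind
  · rintro ⟨c1, c2⟩ - hc
    simp only [permP, Matrix.of_apply]
    grind
  · simp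

theorem comm_prod {A B : Type*} [Monoid A] [Monoid B] (f : A → B) (h1 : f 1 = 1)
    (hm : ∀ a b, f (a * b) = f a * f b) (X : B) (l : List A)
    (h : ∀ a ∈ l, Commute X (f a)) : Commute X (f l.prod) := by
  induction l with
  | nil => simp [h1]
  | cons a l ih =>
    rw [List.prod_cons, hm]
    exact (h a (by simp)).mul_right (ih fun b hb => h b (by simp [hb]))

theorem erase_prod {A : Type*} [Monoid A] (l : List A) (i : ℕ) (hi : i < l.length)
    (h : ∀ a ∈ l, Commute l[i] a) : l[i] * (l.eraseIdx i).prod = l.prod := by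
  induction l generalizing i with
  | nil => simp at hi
  | cons a l ih =>
    cases i with
    | zero => simp
    | succ i =>
      simp only [List.getElem_cons_succ, List.eraseIdx_cons_succ, List.prod_cons] at h ⊢
      rw [← ih i (by simpa using hi) (fun b hb => h b (by simp [hb])), ← mul_assoc,
        (h a (by simp)).eq, mul_assoc]

/-- let `R` be an invertible solution of the QYBE, `x₁,…,x_m ∈ k` with
`x_{i₀} = −1`, and suppose the braiding `PR` satisfies `∏_{j=1}^{m} (PR − x_j·I) = 0`.
With `R' := P + P·∏_{j ≠ i₀}(PR − x_j·I)` one has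
(i) `(PR + I)(PR' − I) = 0`; (ii) `R₁₂R₁₃R'₂₃ = R'₂₃R₁₃R₁₂`;
(iii) `R₂₃R₁₃R'₁₂ = R'₁₂R₁₃R₂₃`; (iv) `R₂₁R'₁₂ = R'₂₁R₁₂` where `R₂₁ = PRP`, `R'₂₁ = PR'P`. -/
theorem stmt5 {k : Type*} [CommRing k] {n : ℕ} (hn : 0 < n)
    (R : Matrix (Fin n × Fin n) (Fin n × Fin n) k)
    (hR : IsUnit R)
    (hQYBE : L12 R * L13 R * L23 R = L23 R * L13 R * L12 R)
    {m : ℕ} (x : Fin m → k) (i0 : Fin m) (hx : x i0 = -1)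
    (hmin : (List.ofFn fun j : Fin m =>
        permP k n * R - x j • (1 : Matrix (Fin n × Fin n) (Fin n × Fin n) k)).prod = 0)
    (R' : Matrix (Fin n × Fin n) (Fin n × Fin n) k)
    (hR' : R' = permP k n + permP k n *
        ((List.ofFn fun j : Fin m =>
          permP k n * R - x j • (1 : Matrix (Fin n × Fin n) (Fin n × Fin n) k)).eraseIdx
            i0.val).prod) :
    ((permP k n * R + 1) * (permP k n * R' - 1) = 0) ∧
    (L12 R * L13 R * L23 R' = L23 R' * L13 R * L12 R) ∧
    (L23 R * L13 R * L12 R' = L12 R' * L13 R * L23 R) ∧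
    ((permP k n * R * permP k n) * R' = (permP k n * R' * permP k n) * R) := by
  have hP : permP k n * permP k n = 1 := permP_sq
  set B := permP k n * R with hB
  set l := List.ofFn fun j : Fin m =>
        B - x j • (1 : Matrix (Fin n × Fin n) (Fin n × Fin n) k) with hl
  set Q := (l.eraseIdx i0.val).prod with hQ
  have hmem : ∀ a ∈ l, ∃ c : k, a = B - c • 1 := by
    intro a ha
    rw [hl, List.mem_ofFn] at ha
    obtain ⟨j, hj⟩ := ha
    exact ⟨x j, hj.symm⟩
  have hmem' : ∀ a ∈ l.eraseIdx i0.val, ∃ c : k, a = B - c • 1 :=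
    fun a ha => hmem a (List.mem_of_mem_eraseIdx ha)
  have hone : ∀ c : k, Commute B (c • (1 : Matrix (Fin n × Fin n) (Fin n × Fin n) k)) :=
    fun c => (Commute.one_right B).smul_right c
  have hBQ : Commute B Q := by
    refine comm_prod (fun a => a) rfl (fun _ _ => rfl) B _ ?_
    intro a ha
    obtain ⟨c, rfl⟩ := hmem' a ha
    exact (Commute.refl B).sub_right (hone c)
  have hlen : i0.val < l.length := by simp [hl]
  have hli : l[i0.val] = B + 1 := by
    simp [hl, hx]
  have hzero : (B + 1) * Q = 0 := by
    rw [← hmin, ← hli]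
    refine erase_prod l _ hlen ?_
    intro a ha
    obtain ⟨c, rfl⟩ := hmem a ha
    rw [hli]
    exact (((Commute.refl B).sub_right (hone c))).add_left (Commute.one_left _)
  have hRB : R = permP k n * B := by rw [hB, ← mul_assoc, hP, one_mul]
  have hR'1 : R' = permP k n * (1 + Q) := by rw [hR', mul_add, mul_one]
  have hPR' : permP k n * R' = 1 + Q := by rw [hR'1, ← mul_assoc, hP, one_mul]
  have e1 : L13 R * L23 (permP k n) = L23 (permP k n) * L12 R := by
    ext a b
    rw [L23_mulP, L23_Pmul]; simp [L13, L12]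
  have e2 : L12 R * L23 (permP k n) = L23 (permP k n) * L13 R := by
    ext a b
    rw [L23_mulP, L23_Pmul]; simp [L13, L12]
  have e3 : L13 R * L12 (permP k n) = L12 (permP k n) * L23 R := by
    ext a b
    rw [L12_mulP, L12_Pmul]; simp [L13, L23]
  have e4 : L23 R * L12 (permP k n) = L12 (permP k n) * L13 R := by
    ext a b
    rw [L12_mulP, L12_Pmul]; simp [L13, L23]
  have c1 : Commute (L13 R * L12 R) (L23 B) := by
    change _ * _ = _ * _
    rw [hB, L23_mul, mul_assoc (L23 (permP k n)), ← mul_assoc (L23 R), ← hQYBE]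
    simp only [← mul_assoc]
    rw [mul_assoc (L13 R), e2, ← mul_assoc, e1]
  have c2 : Commute (L13 R * L23 R) (L12 B) := by
    change _ * _ = _ * _
    rw [hB, L12_mul, mul_assoc (L12 (permP k n)), ← mul_assoc (L12 R), hQYBE]
    simp only [← mul_assoc]
    rw [mul_assoc (L13 R), e4, ← mul_assoc, e3]
  have d1 : Commute (L13 R * L12 R) (L23 (1 + Q)) := by
    rw [L23_add, L23_one]
    refine (Commute.one_right _).add_right (comm_prod L23 L23_one L23_mul _ _ ?_)
    intro a ha
    obtain ⟨c, rfl⟩ := hmem' a ha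
    rw [L23_poly]
    exact c1.sub_right ((Commute.one_right _).smul_right c)
  have d2 : Commute (L13 R * L23 R) (L12 (1 + Q)) := by
    rw [L12_add, L12_one]
    refine (Commute.one_right _).add_right (comm_prod L12 L12_one L12_mul _ _ ?_)
    intro a ha
    obtain ⟨c, rfl⟩ := hmem' a ha
    rw [L12_poly]
    exact c2.sub_right ((Commute.one_right _).smul_right c)
  refine ⟨?_, ?_, ?_, ?_⟩
  · rw [hPR', add_sub_cancel_left, hzero]
  · rw [hR'1, L23_mul, mul_assoc (L23 (permP k n) * _), mul_assoc (L23 (permP k n)), ← d1.eq,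
      ← mul_assoc, mul_assoc (L12 R), e1, ← mul_assoc (L12 R), e2]
    simp only [mul_assoc]
  · rw [hR'1, L12_mul, mul_assoc (L12 (permP k n) * _), mul_assoc (L12 (permP k n)), ← d2.eq,
      ← mul_assoc, mul_assoc (L23 R), e3, ← mul_assoc (L23 R), e4]
    simp only [mul_assoc]
  · rw [mul_assoc B, hPR', mul_assoc (1 + Q), ← hB]
    exact ((Commute.one_right B).add_right hBQ).eq
end

section
/- Let R be an n²×n² matrix over k, and let m, m⁺, m⁻ be n×n matrices over S whose transposes mᵗ, (m⁺)ᵗ, (m⁻)ᵗ are invertible in the matrix ring Mₙ(S). Put m̂ := ((mᵗ)⁻¹)ᵗ, m̂⁺ := (((m⁺)ᵗ)⁻¹)ᵗ, m̂⁻ := (((m⁻)ᵗ)⁻¹)ᵗ. Then: (i) R·m₁·m₂ = m₂·m₁·R if and only if R·m̂₂·m̂₁ = m̂₁·m̂₂·R; (ii) R·m⁺₁·m⁻₂ = m⁻₂·m⁺₁·R if and only if R·m̂⁻₂·m̂⁺₁ = m̂⁺₁·m̂⁻₂·R. (These equivalences are the key step showing that S(m^±) := ((m^±)ᵗ)⁻¹,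 extended as an anti-algebra map, respects the defining relations of the quotient bialgebra Û(R) and hence makes Û(R) a Hopf algebra.) -/
open Matrix

/-- For an `n×n` matrix `m` over `S`, the `n²×n²` matrix `m₁` with entries
`(m₁)^{(i,j)}_{(k,l)} = m^i_k δ_{jl}`. -/
def matLift1 {S : Type*} [Semiring S] {n : ℕ} (m : Matrix (Fin n) (Fin n) S) :
    Matrix (Fin n × Fin n) (Fin n × Fin n) S :=
  Matrix.of fun p q => if p.2 = q.2 then m p.1 q.1 else 0

/-- For an `n×n` matrix `m` over `S`, the `n²×n²` matrix `m₂` with entries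
`(m₂)^{(i,j)}_{(k,l)} = δ_{ik} m^j_l`. -/
def matLift2 {S : Type*} [Semiring S] {n : ℕ} (m : Matrix (Fin n) (Fin n) S) :
    Matrix (Fin n × Fin n) (Fin n × Fin n) S :=
  Matrix.of fun p q => if p.1 = q.1 then m p.2 q.2 else 0

section helpers
variable {k S : Type*} [CommRing k] [Ring S] [Algebra k S] {n : ℕ}

theorem aux_l1_mul (a b : Matrix (Fin n) (Fin n) S) :
    matLift1 a * matLift1 b = matLift1 (a * b) := by
  ext ⟨i, j⟩ ⟨x, y⟩
  by_cases h : j = y <;>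
  simp [matLift1, Matrix.mul_apply, Fintype.sum_prod_type, h]

theorem aux_l2_mul (a b : Matrix (Fin n) (Fin n) S) :
    matLift2 a * matLift2 b = matLift2 (a * b) := by
  ext ⟨i, j⟩ ⟨x, y⟩
  by_cases h : i = x <;>
  simp [matLift2, Matrix.mul_apply, Fintype.sum_prod_type_right, h]

theorem aux_l1_one : matLift1 (1 : Matrix (Fin n) (Fin n) S) = 1 := by
  ext ⟨i, j⟩ ⟨x, y⟩
  by_cases h : j = y <;> simp [matLift1, Matrix.one_apply, h]

theorem aux_l2_one : matLift2 (1 : Matrix (Fin n) (Fin n) S) = 1 := by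
  ext ⟨i, j⟩ ⟨x, y⟩
  by_cases h : i = x <;> simp [matLift2, Matrix.one_apply, h]

theorem aux_t12 (a b : Matrix (Fin n) (Fin n) S) :
    (matLift1 a * matLift2 b)ᵀ = matLift1 aᵀ * matLift2 bᵀ := by
  ext ⟨i, j⟩ ⟨x, y⟩
  simp [matLift1, matLift2, Matrix.mul_apply, Fintype.sum_prod_type]

theorem aux_t21 (a b : Matrix (Fin n) (Fin n) S) :
    (matLift2 b * matLift1 a)ᵀ = matLift2 bᵀ * matLift1 aᵀ := by
  ext ⟨i, j⟩ ⟨x, y⟩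
  simp [matLift1, matLift2, Matrix.mul_apply, Fintype.sum_prod_type]

theorem aux_tl (R : Matrix (Fin n × Fin n) (Fin n × Fin n) k)
    (P : Matrix (Fin n × Fin n) (Fin n × Fin n) S) :
    (R.map (algebraMap k S) * P)ᵀ = Pᵀ * (R.map (algebraMap k S))ᵀ := by
  ext i j
  simp only [Matrix.mul_apply, Matrix.transpose_apply, Matrix.map_apply]
  exact Finset.sum_congr rfl fun x _ => Algebra.commutes _ _

theorem aux_tr (R : Matrix (Fin n × Fin n) (Fin n × Fin n) k)
    (P : Matrix (Fin n × Fin n) (Fin n × Fin n) S) :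
    (P * R.map (algebraMap k S))ᵀ = (R.map (algebraMap k S))ᵀ * Pᵀ := by
  ext i j
  simp only [Matrix.mul_apply, Matrix.transpose_apply, Matrix.map_apply]
  exact Finset.sum_congr rfl fun x _ => (Algebra.commutes _ _).symm

theorem aux_inv {A : Type*} [Ring A] {a u b v : A} (h : a * u = 1) (h' : b * v = 1) :
    (a * b) * (v * u) = 1 := by
  rw [mul_assoc, ← mul_assoc b, h', one_mul, h]

theorem aux_conj {A : Type*} [Monoid A] {P W Q Z T : A} (h1 : P * W = 1) (h2 : W * P = 1)
    (h3 : Q * Z = 1) (h4 : Z * Q = 1) : P * T = T * Q ↔ T * Z = W * T := by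
  constructor
  · intro h
    calc T * Z = (W * P) * T * Z := by rw [h2, one_mul]
      _ = W * (P * T) * Z := by simp only [mul_assoc]
      _ = W * T * (Q * Z) := by rw [h]; simp only [mul_assoc]
      _ = W * T := by rw [h3, mul_one]
  · intro h
    calc P * T = P * T * (Z * Q) := by rw [h4, mul_one]
      _ = P * (T * Z) * Q := by simp only [mul_assoc]
      _ = (P * W) * T * Q := by rw [h]; simp only [mul_assoc]
      _ = T * Q := by rw [h1, one_mul]

theorem aux_main (R : Matrix (Fin n × Fin n) (Fin n × Fin n) k)
    (a b u v : Matrix (Fin n) (Fin n) S)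
    (hu1 : aᵀ * u = 1) (hu2 : u * aᵀ = 1) (hv1 : bᵀ * v = 1) (hv2 : v * bᵀ = 1) :
    R.map (algebraMap k S) * matLift1 a * matLift2 b =
        matLift2 b * matLift1 a * R.map (algebraMap k S) ↔
      R.map (algebraMap k S) * matLift2 vᵀ * matLift1 uᵀ =
        matLift1 uᵀ * matLift2 vᵀ * R.map (algebraMap k S) := by
  have l1 : ∀ x y : Matrix (Fin n) (Fin n) S, x * y = 1 → matLift1 x * matLift1 y = 1 := by
    intro x y h
    rw [aux_l1_mul, h, aux_l1_one]
  have l2 : ∀ x y : Matrix (Fin n) (Fin n) S, x * y = 1 → matLift2 x * matLift2 y = 1 := by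
    intro x y h
    rw [aux_l2_mul, h, aux_l2_one]
  rw [Matrix.mul_assoc (R.map _), Matrix.mul_assoc (R.map _),
    ← Matrix.transpose_inj, aux_tl, aux_tr, aux_t12, aux_t21,
    ← Matrix.transpose_inj (A := R.map (algebraMap k S) * (matLift2 vᵀ * matLift1 uᵀ)),
    aux_tl, aux_tr, aux_t12, aux_t21, Matrix.transpose_transpose, Matrix.transpose_transpose]
  rw [aux_conj (aux_inv (l1 _ _ hu1) (l2 _ _ hv1)) (aux_inv (l2 _ _ hv2) (l1 _ _ hu2))
    (aux_inv (l2 _ _ hv1) (l1 _ _ hu1)) (aux_inv (l1 _ _ hu2) (l2 _ _ hv2))]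
  exact eq_comm

end helpers

/-- with `m̂ := ((mᵗ)⁻¹)ᵗ` (here `w` is the two-sided inverse of `mᵗ`, so
`m̂ = wᵗ`, and similarly for `m⁺`, `m⁻`):
(i) `R·m₁·m₂ = m₂·m₁·R ↔ R·m̂₂·m̂₁ = m̂₁·m̂₂·R`;
(ii) `R·m⁺₁·m⁻₂ = m⁻₂·m⁺₁·R ↔ R·m̂⁻₂·m̂⁺₁ = m̂⁺₁·m̂⁻₂·R`. -/
theorem stmt6 {k S : Type*} [CommRing k] [Ring S] [Algebra k S] {n : ℕ} (hn : 0 < n)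
    (R : Matrix (Fin n × Fin n) (Fin n × Fin n) k)
    (m mp mm w wp wm : Matrix (Fin n) (Fin n) S)
    (hw1 : mᵀ * w = 1) (hw2 : w * mᵀ = 1)
    (hwp1 : mpᵀ * wp = 1) (hwp2 : wp * mpᵀ = 1)
    (hwm1 : mmᵀ * wm = 1) (hwm2 : wm * mmᵀ = 1) :
    (R.map (algebraMap k S) * matLift1 m * matLift2 m =
        matLift2 m * matLift1 m * R.map (algebraMap k S) ↔
      R.map (algebraMap k S) * matLift2 wᵀ * matLift1 wᵀ =
        matLift1 wᵀ * matLift2 wᵀ * R.map (algebraMap k S)) ∧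
    (R.map (algebraMap k S) * matLift1 mp * matLift2 mm =
        matLift2 mm * matLift1 mp * R.map (algebraMap k S) ↔
      R.map (algebraMap k S) * matLift2 wmᵀ * matLift1 wpᵀ =
        matLift1 wpᵀ * matLift2 wmᵀ * R.map (algebraMap k S)) := by
  exact ⟨aux_main R m m w w hw1 hw2 hw1 hw2, aux_main R mp mm wp wm hwp1 hwp2 hwm1 hwm2⟩
end

section
/- Let R be an n²×n² matrix over k and let m be an n×n matrix over S which is invertible in the matrix ring Mₙ(S). Then R·m₁·m₂ = m₂·m₁·R if and only if m₁·((m⁻¹)ᵗ)₂·R^{t₂} = R^{t₂}·((m⁻¹)ᵗ)₂·m₁. -/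
open Matrix

theorem aux_lift2_mul {S : Type*} [Ring S] {n : ℕ} (a b : Matrix (Fin n) (Fin n) S) (h : a * b = 1) :
    matLift2 a * matLift2 b = 1 := by
  ext ⟨i, j⟩ ⟨p, q⟩
  have := congrFun (congrFun h j) q
  simp only [Matrix.mul_apply, Matrix.one_apply] at this
  by_cases hip : i = p
  · simp [Matrix.mul_apply, matLift2, Fintype.sum_prod_type, Matrix.one_apply, hip, ← this]
  · simp [Matrix.mul_apply, matLift2, Fintype.sum_prod_type, Matrix.one_apply, hip]

theorem aux_left {k S : Type*} [CommRing k] [Ring S] [Algebra k S] {n : ℕ}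
    (R : Matrix (Fin n × Fin n) (Fin n × Fin n) k) (m w : Matrix (Fin n) (Fin n) S) :
    matLift1 m * matLift2 wᵀ * pt2 (R.map (algebraMap k S)) =
      pt2 (matLift1 m * R.map (algebraMap k S) * matLift2 w) := by
  ext ⟨i, j⟩ ⟨p, q⟩
  simp only [Matrix.mul_apply, matLift1, matLift2, pt2, Fintype.sum_prod_type, Matrix.of_apply,
    Matrix.map_apply, Matrix.transpose_apply, ite_mul, mul_ite, zero_mul, mul_zero,
    Finset.sum_ite_eq, Finset.sum_ite_eq', Finset.mem_univ, if_true, Finset.sum_ite_irrel,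
    Finset.sum_const_zero, Finset.sum_mul]
  rw [Finset.sum_comm]
  refine Finset.sum_congr rfl fun b _ => Finset.sum_congr rfl fun a _ => ?_
  rw [mul_assoc, mul_assoc, Algebra.commutes]

theorem aux_right {k S : Type*} [CommRing k] [Ring S] [Algebra k S] {n : ℕ}
    (R : Matrix (Fin n × Fin n) (Fin n × Fin n) k) (m w : Matrix (Fin n) (Fin n) S) :
    pt2 (R.map (algebraMap k S)) * matLift2 wᵀ * matLift1 m =
      pt2 (matLift2 w * R.map (algebraMap k S) * matLift1 m) := by
  ext ⟨i, j⟩ ⟨p, q⟩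
  simp only [Matrix.mul_apply, matLift1, matLift2, pt2, Fintype.sum_prod_type, Matrix.of_apply,
    Matrix.map_apply, Matrix.transpose_apply, ite_mul, mul_ite, zero_mul, mul_zero,
    Finset.sum_ite_eq, Finset.sum_ite_eq', Finset.mem_univ, if_true, Finset.sum_ite_irrel,
    Finset.sum_const_zero, Finset.sum_mul]
  refine Finset.sum_congr rfl fun b _ => Finset.sum_congr rfl fun a _ => ?_
  rw [Algebra.commutes]

theorem aux_inj {α : Type*} {n : ℕ} (A B : Matrix (Fin n × Fin n) (Fin n × Fin n) α) :
    pt2 A = pt2 B ↔ A = B := by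
  constructor
  · intro h
    ext ⟨i, j⟩ ⟨p, q⟩
    exact congrFun (congrFun h (i, q)) (p, j)
  · rintro rfl
    rfl

/-- for `m` invertible in `Mₙ(S)` (with two-sided inverse `minv`):
`R·m₁·m₂ = m₂·m₁·R ↔ m₁·((m⁻¹)ᵗ)₂·R^{t₂} = R^{t₂}·((m⁻¹)ᵗ)₂·m₁`. -/
theorem stmt7 {k S : Type*} [CommRing k] [Ring S] [Algebra k S] {n : ℕ} (hn : 0 < n)
    (R : Matrix (Fin n × Fin n) (Fin n × Fin n) k)
    (m minv : Matrix (Fin n) (Fin n) S)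
    (hm1 : m * minv = 1) (hm2 : minv * m = 1) :
    R.map (algebraMap k S) * matLift1 m * matLift2 m =
        matLift2 m * matLift1 m * R.map (algebraMap k S) ↔
      matLift1 m * matLift2 minvᵀ * pt2 (R.map (algebraMap k S)) =
        pt2 (R.map (algebraMap k S)) * matLift2 minvᵀ * matLift1 m := by
  rw [aux_left, aux_right, aux_inj]
  have h1 := aux_lift2_mul m minv hm1
  have h2 := aux_lift2_mul minv m hm2
  generalize matLift2 m = M at *
  generalize matLift2 minv = W at *
  generalize matLift1 m = L at *
  generalize R.map (algebraMap k S) = Q at *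
  constructor
  · intro h
    calc L * Q * W = W * (M * L * Q) * W := by
          rw [mul_assoc M, ← mul_assoc W, h2, one_mul]
      _ = W * Q * L := by
          rw [← h, mul_assoc W, mul_assoc (Q * L), h1, mul_one, mul_assoc]
  · intro h
    calc Q * L * M = M * (W * Q * L) * M := by
          rw [mul_assoc W, ← mul_assoc M W, h1, one_mul]
      _ = M * L * Q := by
          rw [← h, mul_assoc M, mul_assoc (L * Q), h2, mul_one, mul_assoc]
end

section
/- Let R be an invertible n²×n² matrix over k such that (R⁻¹)^{t₁} is invertible, let m⁺ be an n×n matrix over S which is invertible in Mₙ(S), and let m⁻ be any n×n matrix over S. Then R·m⁺₁·m⁻₂ = m⁻₂·m⁺₁·R if and only if ((R⁻¹)^{t₁})⁻¹·m⁻₂·(((m⁺)⁻¹)ᵗ)₁ = (((m⁺)⁻¹)ᵗ)₁·m⁻₂·((R⁻¹)^{t₁})⁻¹. -/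
open Matrix

theorem l2_mul {S : Type*} [Ring S] {n : ℕ} (b : Matrix (Fin n) (Fin n) S)
    (M : Matrix (Fin n × Fin n) (Fin n × Fin n) S) (p q : Fin n × Fin n) :
    (matLift2 b * M) p q = ∑ s, b p.2 s * M (p.1, s) q := by
  simp only [Matrix.mul_apply, matLift2, Matrix.of_apply, Fintype.sum_prod_type, ite_mul, zero_mul]
  rw [Finset.sum_comm]
  simp

theorem l1_mul {S : Type*} [Ring S] {n : ℕ} (b : Matrix (Fin n) (Fin n) S)
    (M : Matrix (Fin n × Fin n) (Fin n × Fin n) S) (p q : Fin n × Fin n) :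
    (matLift1 b * M) p q = ∑ s, b p.1 s * M (s, p.2) q := by
  simp [Matrix.mul_apply, matLift1, Fintype.sum_prod_type, ite_mul, zero_mul]

theorem mul_l2 {S : Type*} [Ring S] {n : ℕ} (b : Matrix (Fin n) (Fin n) S)
    (M : Matrix (Fin n × Fin n) (Fin n × Fin n) S) (p q : Fin n × Fin n) :
    (M * matLift2 b) p q = ∑ s, M p (q.1, s) * b s q.2 := by
  simp only [Matrix.mul_apply, matLift2, Matrix.of_apply, Fintype.sum_prod_type, mul_ite, mul_zero]
  rw [Finset.sum_comm]
  simp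

theorem mul_l1 {S : Type*} [Ring S] {n : ℕ} (b : Matrix (Fin n) (Fin n) S)
    (M : Matrix (Fin n × Fin n) (Fin n × Fin n) S) (p q : Fin n × Fin n) :
    (M * matLift1 b) p q = ∑ s, M p (s, q.2) * b s q.1 := by
  simp [Matrix.mul_apply, matLift1, Fintype.sum_prod_type, mul_ite, mul_zero]

theorem l1_mul_l1 {S : Type*} [Ring S] {n : ℕ} (a b : Matrix (Fin n) (Fin n) S)
    (h : a * b = 1) : matLift1 a * matLift1 b = 1 := by
  ext p q
  have := congrFun (congrFun h p.1) q.1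
  rw [Matrix.mul_apply] at this
  rw [l1_mul]
  by_cases h2 : p.2 = q.2
  · simp [matLift1, h2, this, Matrix.one_apply, Prod.ext_iff]
  · simp [matLift1, h2, Matrix.one_apply, Prod.ext_iff]

theorem pt_left {k S : Type*} [CommRing k] [Ring S] [Algebra k S] {n : ℕ}
    (Q : Matrix (Fin n × Fin n) (Fin n × Fin n) k) (b c : Matrix (Fin n) (Fin n) S) :
    pt1 (matLift2 b * Q.map (algebraMap k S) * matLift1 c) =
      matLift2 b * matLift1 cᵀ * (pt1 Q).map (algebraMap k S) := by
  ext p q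
  rw [Matrix.mul_assoc, Matrix.mul_assoc, l2_mul]
  simp only [pt1, Matrix.of_apply, l2_mul, l1_mul, mul_l1, Matrix.map_apply, Matrix.transpose_apply]
  simp only [Algebra.commutes]

theorem pt_right {k S : Type*} [CommRing k] [Ring S] [Algebra k S] {n : ℕ}
    (Q : Matrix (Fin n × Fin n) (Fin n × Fin n) k) (b c : Matrix (Fin n) (Fin n) S) :
    pt1 (matLift1 c * Q.map (algebraMap k S) * matLift2 b) =
      (pt1 Q).map (algebraMap k S) * matLift1 cᵀ * matLift2 b := by
  ext p q
  simp only [pt1, Matrix.of_apply, l1_mul, mul_l2, mul_l1, Matrix.map_apply, Matrix.transpose_apply]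
  simp only [Algebra.commutes]

theorem pt1_inj {α : Type*} {n : ℕ} {M N : Matrix (Fin n × Fin n) (Fin n × Fin n) α} :
    pt1 M = pt1 N ↔ M = N := by
  refine ⟨fun h => ?_, fun h => h ▸ rfl⟩
  have h2 : pt1 (pt1 M) = pt1 (pt1 N) := by rw [h]
  exact h2

theorem swap_aux {A : Type*} [Ring A] {P P' x y : A} (h1 : P * P' = 1) (h2 : P' * P = 1) :
    x * P = P * y ↔ P' * x = y * P' := by
  constructor
  · intro h
    calc P' * x = P' * (x * P) * P' := by simp [mul_assoc, h1]
      _ = (P' * P) * y * P' := by rw [h]; simp only [mul_assoc]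
      _ = y * P' := by rw [h2, one_mul]
  · intro h
    calc x * P = P * (P' * x) * P := by rw [← mul_assoc P, h1, one_mul]
      _ = P * y * (P' * P) := by rw [h]; simp only [mul_assoc]
      _ = P * y := by rw [h2, mul_one]

theorem map_mul_one {k S : Type*} [CommRing k] [Ring S] [Algebra k S] {n : ℕ}
    {A B : Matrix (Fin n × Fin n) (Fin n × Fin n) k} (h : A * B = 1) :
    A.map (algebraMap k S) * B.map (algebraMap k S) = 1 := by
  rw [← Matrix.map_mul, h, Matrix.map_one _ (map_zero _) (map_one _)]

/-- for `R` invertible over `k` with `(R⁻¹)^{t₁}` invertible, `m⁺` invertible in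
`Mₙ(S)` (two-sided inverse `mpinv`) and `m⁻` arbitrary:
`R·m⁺₁·m⁻₂ = m⁻₂·m⁺₁·R ↔
  ((R⁻¹)^{t₁})⁻¹·m⁻₂·(((m⁺)⁻¹)ᵗ)₁ = (((m⁺)⁻¹)ᵗ)₁·m⁻₂·((R⁻¹)^{t₁})⁻¹`. -/
theorem stmt8 {k S : Type*} [CommRing k] [Ring S] [Algebra k S] {n : ℕ} (hn : 0 < n)
    (R : Matrix (Fin n × Fin n) (Fin n × Fin n) k)
    (hR : IsUnit R) (ht1 : IsUnit (pt1 R⁻¹))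
    (mp mpinv mm : Matrix (Fin n) (Fin n) S)
    (hmp1 : mp * mpinv = 1) (hmp2 : mpinv * mp = 1) :
    R.map (algebraMap k S) * matLift1 mp * matLift2 mm =
        matLift2 mm * matLift1 mp * R.map (algebraMap k S) ↔
      ((pt1 R⁻¹)⁻¹).map (algebraMap k S) * matLift2 mm * matLift1 mpinvᵀ =
        matLift1 mpinvᵀ * matLift2 mm * ((pt1 R⁻¹)⁻¹).map (algebraMap k S) := by
  have d1 := (Matrix.isUnit_iff_isUnit_det _).1 hR
  have d2 := (Matrix.isUnit_iff_isUnit_det _).1 ht1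
  have r1 := map_mul_one (S := S) (Matrix.mul_nonsing_inv _ d1)
  have r2 := map_mul_one (S := S) (Matrix.nonsing_inv_mul _ d1)
  have p1 := map_mul_one (S := S) (Matrix.mul_nonsing_inv _ d2)
  have p2 := map_mul_one (S := S) (Matrix.nonsing_inv_mul _ d2)
  have a1 := l1_mul_l1 _ _ hmp1
  have a2 := l1_mul_l1 _ _ hmp2
  have L := pt_left R⁻¹ mm mpinv
  have Rt := pt_right R⁻¹ mm mpinv
  rw [Matrix.mul_assoc (Matrix.map _ _) (matLift2 mm), ← swap_aux p1 p2, ← Matrix.mul_assoc, ← L, ← Rt,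
    pt1_inj, Matrix.mul_assoc (Matrix.map _ _), ← swap_aux r2 r1, Matrix.mul_assoc,
    Matrix.mul_assoc (matLift1 mpinv), swap_aux a2 a1, Matrix.mul_assoc (Matrix.map _ _) (matLift2 mm)]
end

section
/- Given a dual pairing of bialgebras H and A over k, let ℛ : A → H be a k-linear map that is convolution invertible, with convolution inverse ℛ⁻¹ (so ℛ ∗ ℛ⁻¹ = ℛ⁻¹ ∗ ℛ = η_H ∘ ε_A). If g, h ∈ H satisfy ∂^R g = ℛ ∗ (∂^L g) ∗ ℛ⁻¹ and ∂^R h = ℛ ∗ (∂^L h) ∗ ℛ⁻¹, then the product gh satisfies ∂^R(gh) = ℛ ∗ (∂^L(gh)) ∗ ℛ⁻¹. (Consequently, the weak quasitriangularity conditions of a weakly quasitriangular dual pair need only be verified on algebra generators of H.) -/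
open TensorProduct

/-- Convolution product of linear maps from a coalgebra `A` to an algebra `H`:
`(f ∗ g)(a) = Σ f(a₍₁₎)·g(a₍₂₎)`. -/
noncomputable def conv {k A H : Type*} [CommRing k]
    [AddCommMonoid A] [Module k A] [Coalgebra k A]
    [Ring H] [Algebra k H] (f g : A →ₗ[k] H) : A →ₗ[k] H :=
  LinearMap.mul' k H ∘ₗ TensorProduct.map f g ∘ₗ (Coalgebra.comul : A →ₗ[k] A ⊗[k] A)

/-- Left differentiation operator `∂^L h : A → H`, `(∂^L h)(a) = Σ ⟨h₍₁₎, a⟩·h₍₂₎`,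
associated with a pairing `pair : H → (A → k)`. -/
noncomputable def dL {k A H : Type*} [CommRing k]
    [AddCommMonoid A] [Module k A]
    [AddCommMonoid H] [Module k H] [Coalgebra k H]
    (pair : H →ₗ[k] A →ₗ[k] k) (h : H) : A →ₗ[k] H :=
  ((TensorProduct.lift (LinearMap.smulRightₗ ∘ₗ pair)).comp
    (Coalgebra.comul : H →ₗ[k] H ⊗[k] H)) h

/-- Right differentiation operator `∂^R h : A → H`, `(∂^R h)(a) = Σ h₍₁₎·⟨h₍₂₎, a⟩`. -/
noncomputable def dR {k A H : Type*} [CommRing k]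
    [AddCommMonoid A] [Module k A]
    [AddCommMonoid H] [Module k H] [Coalgebra k H]
    (pair : H →ₗ[k] A →ₗ[k] k) (h : H) : A →ₗ[k] H :=
  ((TensorProduct.lift (LinearMap.smulRightₗ ∘ₗ pair).flip).comp
    (Coalgebra.comul : H →ₗ[k] H ⊗[k] H)) h

/-- The unit of the convolution algebra `Hom(A, H)`: `a ↦ ε(a)·1_H`. -/
noncomputable def convUnit (k : Type*) {A : Type*} (H : Type*) [CommRing k]
    [AddCommMonoid A] [Module k A] [Coalgebra k A]
    [Ring H] [Algebra k H] : A →ₗ[k] H :=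
  (Algebra.linearMap k H).comp (Coalgebra.counit : A →ₗ[k] k)

section helpers
variable {k H A : Type*} [CommRing k] [Ring H] [Bialgebra k H] [Ring A] [Bialgebra k A]

theorem conv_eq_ofConv (f g : A →ₗ[k] H) :
    conv f g = (WithConv.toConv f * WithConv.toConv g).ofConv := rfl

theorem conv_assoc' (f g e : A →ₗ[k] H) : conv (conv f g) e = conv f (conv g e) := by
  have := mul_assoc (WithConv.toConv f) (WithConv.toConv g) (WithConv.toConv e)
  exact congrArg WithConv.ofConv this

theorem convUnit_conv' (f : A →ₗ[k] H) : conv (convUnit k H) f = f :=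
  congrArg WithConv.ofConv (one_mul (WithConv.toConv f))

theorem conv_add_left' (f g e : A →ₗ[k] H) : conv (f + g) e = conv f e + conv g e := by
  simp [conv, TensorProduct.map_add_left, LinearMap.add_comp, LinearMap.comp_add]

theorem conv_add_right' (f g e : A →ₗ[k] H) : conv e (f + g) = conv e f + conv e g := by
  simp [conv, TensorProduct.map_add_right, LinearMap.add_comp, LinearMap.comp_add]

theorem conv_zero_left' (e : A →ₗ[k] H) : conv 0 e = 0 := by
  simp [conv]

theorem conv_zero_right' (e : A →ₗ[k] H) : conv e 0 = 0 := by
  simp [conv]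

theorem conv_smulRight' (p q : A →ₗ[k] k) (x y : H) :
    (conv p q).smulRight (x * y) = conv (p.smulRight x) (q.smulRight y) := by
  ext a
  simp only [conv, LinearMap.smulRight_apply, LinearMap.comp_apply]
  induction (Coalgebra.comul a : A ⊗[k] A) using TensorProduct.induction_on with
  | zero => simp
  | tmul u v => simp [smul_smul, mul_comm]
  | add u v hu hv => simp only [map_add, add_smul, hu, hv]

theorem mul_aux (T : H ⊗[k] H →ₗ[k] A →ₗ[k] H)
    (hT : ∀ x y z w : H, T ((x * z) ⊗ₜ (y * w)) = conv (T (x ⊗ₜ y)) (T (z ⊗ₜ w)))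
    (s t : H ⊗[k] H) : T (s * t) = conv (T s) (T t) := by
  induction s using TensorProduct.induction_on with
  | zero => simp [conv_zero_left']
  | add u v hu hv => rw [add_mul, map_add, map_add, conv_add_left', hu, hv]
  | tmul x y =>
    induction t using TensorProduct.induction_on with
    | zero => simp [conv_zero_right']
    | add u v hu hv => rw [mul_add, map_add, map_add, conv_add_right', hu, hv]
    | tmul z w => rw [Algebra.TensorProduct.tmul_mul_tmul, hT]

theorem dL_mul' (pair : H →ₗ[k] A →ₗ[k] k)
    (hmulH : ∀ g h : H, pair (g * h) = conv (pair g) (pair h)) (g h : H) :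
    dL pair (g * h) = conv (dL pair g) (dL pair h) := by
  simp only [dL, LinearMap.comp_apply, Bialgebra.comul_mul]
  apply mul_aux
  intro x y z w
  have := conv_smulRight' (pair x) (pair z) y w
  rw [← hmulH] at this
  simpa using this

theorem dR_mul' (pair : H →ₗ[k] A →ₗ[k] k)
    (hmulH : ∀ g h : H, pair (g * h) = conv (pair g) (pair h)) (g h : H) :
    dR pair (g * h) = conv (dR pair g) (dR pair h) := by
  simp only [dR, LinearMap.comp_apply, Bialgebra.comul_mul]
  apply mul_aux
  intro x y z w
  have := conv_smulRight' (pair y) (pair w) x z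
  rw [← hmulH] at this
  simpa using this

end helpers

/-- given a dual pairing of bialgebras `H`, `A` and a convolution-invertible
linear map `ℛ : A → H`, if `∂^R g = ℛ ∗ (∂^L g) ∗ ℛ⁻¹` and `∂^R h = ℛ ∗ (∂^L h) ∗ ℛ⁻¹`, then
`∂^R(gh) = ℛ ∗ (∂^L(gh)) ∗ ℛ⁻¹`. -/
theorem stmt11 {k H A : Type*} [CommRing k]
    [Ring H] [Bialgebra k H] [Ring A] [Bialgebra k A]
    (pair : H →ₗ[k] A →ₗ[k] k)
    (hmulH : ∀ g h : H, pair (g * h) = conv (pair g) (pair h))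
    (hmulA : ∀ a b : A, pair.flip (a * b) = conv (pair.flip a) (pair.flip b))
    (honeH : pair 1 = (Coalgebra.counit : A →ₗ[k] k))
    (honeA : ∀ h : H, pair h 1 = (Coalgebra.counit : H →ₗ[k] k) h)
    (R Rinv : A →ₗ[k] H)
    (hR1 : conv R Rinv = convUnit k H) (hR2 : conv Rinv R = convUnit k H)
    (g h : H)
    (hg : dR pair g = conv (conv R (dL pair g)) Rinv)
    (hh : dR pair h = conv (conv R (dL pair h)) Rinv) :
    dR pair (g * h) = conv (conv R (dL pair (g * h))) Rinv := by
  rw [dR_mul' pair hmulH, dL_mul' pair hmulH, hg, hh]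
  simp only [conv_assoc']
  rw [← conv_assoc' Rinv R, hR2, convUnit_conv']
end

section
/- Let k be a commutative ring, n a positive integer, and R an invertible n²×n² matrix over k such that R^{t₂} is invertible. Let K₀ be the n²×n² matrix with entries (K₀)^{(i,j)}_{(k,l)} = δ_{ij}δ_{kl} and P the permutation matrix. Assume: (a) for all indices i ≠ j and all m, (R⁻¹)^{(m,j)}_{(i,m)} = 0; and (b) for all indices m ≠ n' and all p, ((R^{t₂})⁻¹)^{(n',m)}_{(p,p)} = 0. Then (R⁻¹)^{t₁}·P·(R^{t₂})⁻¹·P·K₀ = D·K₀ for a diagonal matrix D of constants: explicitly, for all i, j, k, l, the entry [(R⁻¹)^{t₁}·P·(R^{t₂})⁻¹·P·K₀]^{(i,j)}_{(k,l)} equals δ_{ij}·δ_{kl}·Σ_{m,p} (R⁻¹)^{(m,j)}_{(j,m)}·((R^{t₂})⁻¹)^{(m,m)}_{(p,p)}. (This is the FRT condition guaranteeing that the FRT bialgebra A(R) extends to the Hopf algebra H_R.) -/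
open Matrix

/-- The matrix `K₀` with entries `(K₀)^{(i,j)}_{(k,l)} = δ_{ij} δ_{kl}`. -/
def K0 (k : Type*) [Semiring k] (n : ℕ) : Matrix (Fin n × Fin n) (Fin n × Fin n) k :=
  Matrix.of fun p q => if p.1 = p.2 ∧ q.1 = q.2 then 1 else 0

theorem mul_permP_aux {k : Type*} [CommRing k] {n : ℕ}
    (M : Matrix (Fin n × Fin n) (Fin n × Fin n) k) (p : Fin n × Fin n) (a b : Fin n) :
    (M * permP k n) p (a, b) = M p (b, a) := by
  rw [Matrix.mul_apply, Finset.sum_eq_single (b, a)]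
  · simp [permP]
  · rintro ⟨x, y⟩ _ h
    have : ¬ (x = b ∧ y = a) := fun h' => h (by rw [h'.1, h'.2])
    simp [permP, this]
  · simp

theorem mul_K0_aux {k : Type*} [CommRing k] {n : ℕ}
    (M : Matrix (Fin n × Fin n) (Fin n × Fin n) k) (p : Fin n × Fin n) (a b : Fin n) :
    (M * K0 k n) p (a, b) = (if a = b then (1 : k) else 0) * ∑ x : Fin n, M p (x, x) := by
  rw [Matrix.mul_apply, Fintype.sum_prod_type]
  by_cases h : a = b <;> simp [K0, h]

/-- under hypotheses (a) and (b), the FRT condition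
`(R⁻¹)^{t₁}·P·(R^{t₂})⁻¹·P·K₀ = D·K₀` holds, with the explicit diagonal constant
`Σ_{m,p} (R⁻¹)^{(m,j)}_{(j,m)}·((R^{t₂})⁻¹)^{(m,m)}_{(p,p)}`. -/
theorem stmt14 {k : Type*} [CommRing k] {n : ℕ} (hn : 0 < n)
    (R : Matrix (Fin n × Fin n) (Fin n × Fin n) k)
    (hR : IsUnit R) (ht2 : IsUnit (pt2 R))
    (ha : ∀ i j m : Fin n, i ≠ j → (R⁻¹) (m, j) (i, m) = 0)
    (hb : ∀ m n' p : Fin n, m ≠ n' → ((pt2 R)⁻¹) (n', m) (p, p) = 0) :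
    ∀ i j a b : Fin n,
      (pt1 R⁻¹ * permP k n * (pt2 R)⁻¹ * permP k n * K0 k n) (i, j) (a, b) =
        (if i = j then (1 : k) else 0) * (if a = b then (1 : k) else 0) *
          ∑ m : Fin n, ∑ p : Fin n, (R⁻¹) (m, j) (j, m) * ((pt2 R)⁻¹) (m, m) (p, p) := by
  intro i j a b
  rw [mul_K0_aux]
  simp only [mul_permP_aux]
  have key : ∀ x : Fin n, (pt1 R⁻¹ * permP k n * (pt2 R)⁻¹) (i, j) (x, x) =
      (if i = j then (1 : k) else 0) *
        ∑ m : Fin n, (R⁻¹) (m, j) (j, m) * ((pt2 R)⁻¹) (m, m) (x, x) := by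
    intro x
    rw [Matrix.mul_apply, Fintype.sum_prod_type, Finset.mul_sum]
    refine Finset.sum_congr rfl fun m _ => ?_
    rw [Finset.sum_eq_single m]
    · rw [mul_permP_aux]
      by_cases h : i = j
      · subst h
        simp [pt1]
      · simp [pt1, h, ha i j m h]
    · intro y _ hy
      rw [hb y m x hy, mul_zero]
    · simp
  simp only [key]
  rw [← Finset.mul_sum, Finset.sum_comm]
  ring
end

section
/- Let k be a commutative ring, q ∈ k an invertible element, and A an associative unital k-algebra containing elements E, x₁, x₂, x₃, x₄, and let c₁, c₂, c₃ ∈ k be scalars such that: x₄·E − q⁻³·E·x₄ = c₃·x₃; E·x₃ − q·x₃·E = c₂·x₂; E·x₂ − q⁻¹·x₂·E = c₁·x₁; and x₁·E = q³·E·x₁. Then E⁴·x₄ − (q³+q+q⁻¹+q⁻³)·E³·x₄·E + (q⁴+q²+2+q⁻²+q⁻⁴)·E²·x₄·E² − (q³+q+q⁻¹+q⁻³)·E·x₄·E³ + x₄·E⁴ = 0. (With E = E₁, x₄ = e⁴ = E₂, x₃ = e³, x₂ = e², x₁ = e¹ and the values c₃ = c₁ = [3]_q^{1/2} q^{−5/2},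 c₂ = [2]_q q^{−3/2} arising from the spin-3/2 representation, this is the degree-4 quantum Serre relation E₁⁴E₂ − [4]₁_q E₁³E₂E₁ + [4]₂_q E₁²E₂E₁² − [4]₃_q E₁E₂E₁³ + E₂E₁⁴ = 0 in the double-bosonization construction of U_q(G₂); note q³+q+q⁻¹+q⁻³ = [4]_q and q⁴+q²+2+q⁻²+q⁻⁴ = [4]_q!/([2]_q![2]_q!).) -/
/-- from the four commutation relations between `E` and `x₁, x₂, x₃, x₄`
(with `qi` the inverse of `q` in `k`), the degree-4 quantum Serre relation follows:
`E⁴x₄ − [4]_q E³x₄E + ([4]_q!/([2]_q![2]_q!)) E²x₄E² − [4]_q Ex₄E³ + x₄E⁴ = 0`. -/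
theorem stmt19 {k A : Type*} [CommRing k] [Ring A] [Algebra k A]
    (q qi : k) (hq : q * qi = 1)
    (E x1 x2 x3 x4 : A) (c1 c2 c3 : k)
    (h4 : x4 * E - qi ^ 3 • (E * x4) = c3 • x3)
    (h3 : E * x3 - q • (x3 * E) = c2 • x2)
    (h2 : E * x2 - qi • (x2 * E) = c1 • x1)
    (h1 : x1 * E = q ^ 3 • (E * x1)) :
    E ^ 4 * x4 - (q ^ 3 + q + qi + qi ^ 3) • (E ^ 3 * x4 * E)
      + (q ^ 4 + q ^ 2 + 2 + qi ^ 2 + qi ^ 4) • (E ^ 2 * x4 * E ^ 2)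
      - (q ^ 3 + q + qi + qi ^ 3) • (E * x4 * E ^ 3) + x4 * E ^ 4 = 0 := by
  have e3 : c3 • (c2 • x2) = E * (c3 • x3) - q • ((c3 • x3) * E) := by
    rw [← h3]; simp only [mul_smul_comm, smul_mul_assoc]; module
  have e2 : c3 • (c2 • (c1 • x1)) = E * (c3 • (c2 • x2)) - qi • ((c3 • (c2 • x2)) * E) := by
    rw [← h2]; simp only [mul_smul_comm, smul_mul_assoc]; module
  have e1 : (c3 • (c2 • (c1 • x1))) * E - q ^ 3 • (E * (c3 • (c2 • (c1 • x1)))) = 0 := by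
    simp only [mul_smul_comm, smul_mul_assoc, h1]; module
  rw [e2, e3, ← h4] at e1
  rw [← e1]
  simp only [pow_succ E, pow_zero E, one_mul, mul_sub, sub_mul, mul_smul_comm, smul_mul_assoc,
    mul_assoc, smul_sub, smul_smul]
  match_scalars <;> grind
end
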